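/- arXiv:1501.03221 — 6 statements merged into one kernel-verified Lean document; each statement's English description precedes it below -/
import Mathlib

section
/- Let p > K ≥ 1, let S be a p×p real symmetric positive semidefinite matrix, let Φ be a p×K real matrix with ΦᵀΦ = I_K, and let γ ≥ 0. Suppose ΦᵀSΦ = V·diag(d₁,…,d_K)·Vᵀ with V a K×K orthogonal matrix and d₁ ≥ d₂ ≥ … ≥ d_K. If d₁ ≤ γ, then setting σ̂² = tr(S)/p and Λ̂ = V·diag((d₁ − σ̂² − γ)₊, …, (d_K − σ̂² − γ)₊)·Vᵀ (which equals the zero matrix), the pair (Λ̂, σ̂²) minimizes h(Λ, σ²) = (1/2)‖S − ΦΛΦᵀ − σ²I_p‖²_F + γ·tr(Λ) over all real σ² ≥ 0 and all K×K real symmetric positive semidefinite matrices Λ; that is, h(Λ̂, σ̂²) ≤ h(Λ, σ²) for all such (Λ, σ²). -/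
open Matrix BigOperators

/-- Squared Frobenius norm of a real matrix. -/
noncomputable def frobSq {m n : Type*} [Fintype m] [Fintype n] (M : Matrix m n ℝ) : ℝ :=
  ∑ i, ∑ j, (M i j) ^ 2

theorem frobSq_eq_trace {m n : Type*} [Fintype m] [Fintype n] (M : Matrix m n ℝ) :
    frobSq M = (Mᵀ * M).trace := by
  simp only [frobSq, Matrix.trace, Matrix.diag_apply, Matrix.mul_apply, Matrix.transpose_apply]
  rw [Finset.sum_comm]
  simp only [sq]

theorem frobSq_nonneg {m n : Type*} [Fintype m] [Fintype n] (M : Matrix m n ℝ) :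
    0 ≤ frobSq M :=
  Finset.sum_nonneg fun _ _ => Finset.sum_nonneg fun _ _ => sq_nonneg _

/-- Expansion of `‖S - A - s I‖²_F`. -/
theorem frobSq_sub_sub_smul_one {n : Type*} [Fintype n] [DecidableEq n]
    (S A : Matrix n n ℝ) (s : ℝ) :
    frobSq (S - A - s • (1 : Matrix n n ℝ)) =
      frobSq S + frobSq A - 2 * (Sᵀ * A).trace - 2 * s * S.trace + 2 * s * A.trace
        + s ^ 2 * Fintype.card n := by
  have hAS : (Aᵀ * S).trace = (Sᵀ * A).trace := by
    rw [← Matrix.trace_transpose, Matrix.transpose_mul, Matrix.transpose_transpose]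
  simp only [frobSq_eq_trace, Matrix.transpose_sub, Matrix.transpose_smul, Matrix.transpose_one,
    Matrix.sub_mul, Matrix.mul_sub, Matrix.smul_mul, Matrix.mul_smul, Matrix.one_mul,
    Matrix.mul_one, Matrix.trace_sub, Matrix.trace_smul, Matrix.trace_transpose,
    Matrix.trace_one, smul_eq_mul, hAS]
  ring

/-- If the spectrum of `V diag(d) Vᵀ` is bounded above by `c`, then its trace pairing with a
positive semidefinite matrix `Λ` is at most `c tr(Λ)`. -/
theorem trace_conj_diagonal_mul_le {n : Type*} [Fintype n] [DecidableEq n]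
    {V Λ : Matrix n n ℝ} (hV : Vᵀ * V = 1) (hΛ : Λ.PosSemidef) {d : n → ℝ} {c : ℝ}
    (hd : ∀ i, d i ≤ c) :
    (V * Matrix.diagonal d * Vᵀ * Λ).trace ≤ c * Λ.trace := by
  have hW : (Vᵀ * Λ * V).PosSemidef := by
    simpa [Matrix.conjTranspose_eq_transpose_of_trivial] using hΛ.conjTranspose_mul_mul_same V
  have htr : (Vᵀ * Λ * V).trace = Λ.trace := by
    rw [Matrix.trace_mul_comm, ← Matrix.mul_assoc, mul_eq_one_comm.mp hV, Matrix.one_mul]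
  have hpair : (V * Matrix.diagonal d * Vᵀ * Λ).trace =
      (Matrix.diagonal d * (Vᵀ * Λ * V)).trace := by
    rw [Matrix.mul_assoc, Matrix.mul_assoc, Matrix.trace_mul_comm, Matrix.mul_assoc]
  rw [hpair, ← htr]
  simp only [Matrix.trace, Matrix.diag_apply, Matrix.diagonal_mul, Finset.mul_sum]
  exact Finset.sum_le_sum fun i _ => mul_le_mul_of_nonneg_right (hd i) hW.diag_nonneg

/-- Proposition 1 of the paper, case `d₁ ≤ γ`: with `σ̂² = tr(S)/p` and
`Λ̂ = V diag((dₖ − σ̂² − γ)₊) Vᵀ`, the pair `(Λ̂, σ̂²)` minimizes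
`h(Λ, σ²) = (1/2)‖S − ΦΛΦᵀ − σ²I‖²_F + γ tr(Λ)` over `σ² ≥ 0` and PSD `Λ`. -/
theorem stmt_0 (p K : ℕ) (hK : 1 ≤ K) (hpK : K < p)
    (S : Matrix (Fin p) (Fin p) ℝ) (hS : S.PosSemidef)
    (Φ : Matrix (Fin p) (Fin K) ℝ) (hΦ : Φᵀ * Φ = 1)
    (γ : ℝ) (hγ : 0 ≤ γ)
    (d : Fin K → ℝ) (hd : Antitone d)
    (V : Matrix (Fin K) (Fin K) ℝ) (hV : Vᵀ * V = 1)
    (hdecomp : Φᵀ * S * Φ = V * Matrix.diagonal d * Vᵀ)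
    (hd1 : d ⟨0, hK⟩ ≤ γ)
    (σ2hat : ℝ) (hσ2hat : σ2hat = S.trace / p)
    (Λhat : Matrix (Fin K) (Fin K) ℝ)
    (hΛhat : Λhat = V * Matrix.diagonal (fun k => max (d k - σ2hat - γ) 0) * Vᵀ) :
    ∀ σ2 : ℝ, 0 ≤ σ2 → ∀ Λ : Matrix (Fin K) (Fin K) ℝ, Λ.PosSemidef →
      (1 / 2) * frobSq (S - Φ * Λhat * Φᵀ - σ2hat • (1 : Matrix (Fin p) (Fin p) ℝ))
          + γ * Λhat.trace ≤
        (1 / 2) * frobSq (S - Φ * Λ * Φᵀ - σ2 • (1 : Matrix (Fin p) (Fin p) ℝ))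
          + γ * Λ.trace := by
  intro σ2 hσ2 Λ hΛ
  have hp : (0 : ℝ) < p := by exact_mod_cast (Nat.zero_le K).trans_lt hpK
  have hdγ : ∀ k, d k ≤ γ := fun k => (hd (Nat.zero_le k.val)).trans hd1
  have hσ2hat_nonneg : 0 ≤ σ2hat := hσ2hat ▸ div_nonneg hS.trace_nonneg hp.le
  have hΛhat_zero : Λhat = 0 := by
    have hmax : (fun k => max (d k - σ2hat - γ) 0) = 0 :=
      funext fun k => max_eq_right (by linarith [hdγ k])
    rw [hΛhat, hmax]
    simp
  have htrS : S.trace = σ2hat * p := by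
    rw [hσ2hat, div_mul_cancel₀ _ hp.ne']
  have hST : Sᵀ = S := by
    simpa [Matrix.conjTranspose_eq_transpose_of_trivial] using hS.isHermitian.eq
  have htrA : (Φ * Λ * Φᵀ).trace = Λ.trace := by
    rw [Matrix.trace_mul_comm, ← Matrix.mul_assoc, hΦ, Matrix.one_mul]
  have hpair : (Sᵀ * (Φ * Λ * Φᵀ)).trace ≤ γ * Λ.trace := by
    have hcycle : (Sᵀ * (Φ * Λ * Φᵀ)).trace = (Φᵀ * S * Φ * Λ).trace := by
      rw [hST, ← Matrix.mul_assoc, Matrix.trace_mul_comm]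
      simp only [Matrix.mul_assoc]
    rw [hcycle, hdecomp]
    exact trace_conj_diagonal_mul_le hV hΛ hdγ
  have hzero : frobSq (0 : Matrix (Fin p) (Fin p) ℝ) = 0 := by simp [frobSq]
  rw [hΛhat_zero, frobSq_sub_sub_smul_one, frobSq_sub_sub_smul_one, htrA, htrS]
  simp only [Matrix.mul_zero, Matrix.zero_mul, Matrix.trace_zero, Fintype.card_fin, hzero]
  nlinarith [frobSq_nonneg (Φ * Λ * Φᵀ), mul_nonneg hσ2 hΛ.trace_nonneg,
    mul_nonneg hp.le (sq_nonneg (σ2 - σ2hat))]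
end

section
/- Let p > K ≥ 1, let S be a p×p real symmetric positive semidefinite matrix, let Φ be a p×K real matrix with ΦᵀΦ = I_K, and let γ ≥ 0. Suppose ΦᵀSΦ = V·diag(d₁,…,d_K)·Vᵀ with V a K×K orthogonal matrix and d₁ ≥ d₂ ≥ … ≥ d_K. Assume d₁ > γ and that the set 𝓛 = { L ∈ {1,…,K} : d_L − γ > (tr(S) − Σ_{k=1}^{L}(d_k − γ))/(p − L) } is nonempty. Set L̂ = max 𝓛, σ̂² = (tr(S) − Σ_{k=1}^{L̂}(d_k − γ))/(p − L̂), λ̂_k = (d_k − σ̂² − γ)₊ for k = 1,…,K, and Λ̂ = V·diag(λ̂₁,…,λ̂_K)·Vᵀ. Then σ̂² ≥ 0, Λ̂ is symmetric positive semidefinite, and (Λ̂, σ̂²) minimizes h(Λ, σ²) = (1/2)‖S − ΦΛΦᵀ − σ²I_p‖²_F + γ·tr(Λ) over all real σ² ≥ 0 and all K×K real symmetric positive semidefinite matrices Λ; that is, h(Λ̂, σ̂²) ≤ h(Λ, σ²) for all such (Λ, σ²). -/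
open Matrix BigOperators

/-- First-order lower bound for the convex function `frobSq`. -/
lemma frobSq_add_two_mul_trace_le {m n : Type*} [Fintype m] [Fintype n]
    (A B : Matrix m n ℝ) : frobSq A + 2 * (A * (B - A)ᵀ).trace ≤ frobSq B := by
  simp only [frobSq, Matrix.trace, Matrix.diag_apply, Matrix.mul_apply, Matrix.transpose_apply,
    Matrix.sub_apply, Finset.mul_sum, ← Finset.sum_add_distrib]
  gcongr with i _ j _
  nlinarith [sq_nonneg (B i j - A i j)]

lemma trace_conj_diagonal_mul {n : Type*} [Fintype n] [DecidableEq n]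
    (V M : Matrix n n ℝ) (g : n → ℝ) :
    (V * Matrix.diagonal g * Vᵀ * M).trace = ∑ k, g k * (Vᵀ * M * V) k k := by
  have h : (V * Matrix.diagonal g * Vᵀ * M).trace
      = (Matrix.diagonal g * (Vᵀ * M * V)).trace := by
    rw [Matrix.mul_assoc, Matrix.mul_assoc, Matrix.trace_mul_comm]
    simp only [Matrix.mul_assoc]
  rw [h]
  simp [Matrix.trace, Matrix.diagonal_mul]

lemma trace_conj_diagonal {n : Type*} [Fintype n] [DecidableEq n]
    {V : Matrix n n ℝ} (hV : Vᵀ * V = 1) (g : n → ℝ) :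
    (V * Matrix.diagonal g * Vᵀ).trace = ∑ k, g k := by
  simpa [hV] using trace_conj_diagonal_mul V 1 g

lemma posSemidef_conj_diagonal {n : Type*} [Fintype n] [DecidableEq n]
    (V : Matrix n n ℝ) {g : n → ℝ} (hg : ∀ k, 0 ≤ g k) :
    (V * Matrix.diagonal g * Vᵀ).PosSemidef := by
  simpa using (Matrix.PosSemidef.diagonal hg).mul_mul_conjTranspose_same V

lemma trace_conj_diagonal_mul_nonneg {n : Type*} [Fintype n] [DecidableEq n]
    (V : Matrix n n ℝ) {M : Matrix n n ℝ} (hM : M.PosSemidef) {g : n → ℝ} (hg : ∀ k, 0 ≤ g k) :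
    0 ≤ (V * Matrix.diagonal g * Vᵀ * M).trace := by
  rw [trace_conj_diagonal_mul]
  have h : (Vᵀ * M * V).PosSemidef := by simpa using hM.conjTranspose_mul_mul_same V
  exact Finset.sum_nonneg fun k _ => mul_nonneg (hg k) h.diag_nonneg

/-- Compressing a positive semidefinite matrix to a subspace does not increase its trace. -/
lemma trace_compression_le {m n : Type*} [Fintype m] [Fintype n] [DecidableEq m] [DecidableEq n]
    {S : Matrix m m ℝ} (hS : S.PosSemidef) {Φ : Matrix m n ℝ} (hΦ : Φᵀ * Φ = 1) :
    (Φᵀ * S * Φ).trace ≤ S.trace := by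
  have hP : ((1 - Φ * Φᵀ) * (1 - Φ * Φᵀ) : Matrix m m ℝ) = 1 - Φ * Φᵀ := by
    have : Φ * Φᵀ * (Φ * Φᵀ) = Φ * Φᵀ := by
      rw [Matrix.mul_assoc, ← Matrix.mul_assoc Φᵀ, hΦ, Matrix.one_mul]
    simp [sub_mul, mul_sub, this]
  have h := (hS.conjTranspose_mul_mul_same (1 - Φ * Φᵀ)).trace_nonneg
  have hsymm : (1 - Φ * Φᵀ)ᴴ = 1 - Φ * Φᵀ := by simp
  rw [hsymm, Matrix.trace_mul_comm, ← Matrix.mul_assoc, hP, Matrix.sub_mul, Matrix.one_mul,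
    Matrix.trace_sub, Matrix.mul_assoc, Matrix.trace_mul_comm Φ] at h
  linarith

/-- First-order optimality conditions are sufficient for a minimizer of the regularized
least-squares objective. -/
lemma objective_le_of_stationary {m n : Type*} [Fintype m] [Fintype n] [DecidableEq m]
    [DecidableEq n] {S : Matrix m m ℝ} {Φ : Matrix m n ℝ} {γ s t : ℝ}
    {L M : Matrix n n ℝ} (hL : Lᵀ = L) (hM : Mᵀ = M)
    (htr : (S - Φ * L * Φᵀ - s • (1 : Matrix m m ℝ)).trace = 0)
    (hgrad : 0 ≤ ((γ • (1 : Matrix n n ℝ)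
      - Φᵀ * (S - Φ * L * Φᵀ - s • (1 : Matrix m m ℝ)) * Φ) * (M - L)).trace) :
    (1 / 2) * frobSq (S - Φ * L * Φᵀ - s • (1 : Matrix m m ℝ)) + γ * L.trace ≤
      (1 / 2) * frobSq (S - Φ * M * Φᵀ - t • (1 : Matrix m m ℝ)) + γ * M.trace := by
  set A := S - Φ * L * Φᵀ - s • (1 : Matrix m m ℝ) with hA
  set B := S - Φ * M * Φᵀ - t • (1 : Matrix m m ℝ) with hB
  have hconv := frobSq_add_two_mul_trace_le A B
  have hBA : (B - A)ᵀ = (s - t) • (1 : Matrix m m ℝ) - Φ * (M - L) * Φᵀ := by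
    have : B - A = (s - t) • (1 : Matrix m m ℝ) - Φ * (M - L) * Φᵀ := by
      rw [hA, hB, Matrix.mul_sub, Matrix.sub_mul, sub_smul]
      abel
    rw [this]
    simp [Matrix.transpose_mul, hM, hL, Matrix.mul_assoc]
  have hinner : (A * (B - A)ᵀ).trace = -(Φᵀ * A * Φ * (M - L)).trace := by
    rw [hBA, Matrix.mul_sub, Matrix.trace_sub, Matrix.mul_smul, Matrix.trace_smul, Matrix.mul_one,
      htr, smul_zero, zero_sub, ← Matrix.mul_assoc, Matrix.trace_mul_comm]
    simp only [Matrix.mul_assoc]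
  rw [Matrix.sub_mul, Matrix.trace_sub, Matrix.smul_mul, Matrix.one_mul, Matrix.trace_smul,
    Matrix.trace_sub, smul_eq_mul] at hgrad
  linarith

/-- Beyond the largest index at which `d ℓ - γ` exceeds the average `c ℓ`, the values `d k - γ`
stay below that average. -/
lemma sub_le_of_maximal_index {p K : ℕ} (hpK : K < p) {τ γ : ℝ} {d c : Fin K → ℝ}
    (hd : Antitone d)
    (hc : ∀ ℓ : Fin K,
      c ℓ = (τ - ∑ k ∈ Finset.Iic ℓ, (d k - γ)) / ((p : ℝ) - ((ℓ : ℕ) + 1)))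
    {L : Fin K} (hmax : ∀ ℓ, L < ℓ → d ℓ - γ ≤ c ℓ) {k : Fin K} (hk : L < k) :
    d k - γ ≤ c L := by
  have hlt : (L : ℕ) + 1 < K := lt_of_le_of_lt hk k.isLt
  let N : Fin K := ⟨L + 1, hlt⟩
  have hLN : L < N := Nat.lt_succ_self _
  have hpos : (0 : ℝ) < p - ((L : ℕ) + 1 + 1) := by
    have : (L : ℕ) + 1 + 1 < p := by omega
    have : (((L : ℕ) + 1 + 1 : ℕ) : ℝ) < p := by exact_mod_cast this
    push_cast at this
    linarith
  have hsum : ∑ j ∈ Finset.Iic N, (d j - γ)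
      = (d N - γ) + ∑ j ∈ Finset.Iic L, (d j - γ) := by
    have : Finset.Iic N = insert N (Finset.Iic L) := by
      ext j
      simp only [Finset.mem_Iic, Finset.mem_insert, Fin.le_def, Fin.ext_iff, N]
      omega
    rw [this, Finset.sum_insert (by simpa using hLN)]
  have hN := hmax N hLN
  rw [hc N, hsum, show ((N : ℕ) : ℝ) = (L : ℕ) + 1 by simp [N], le_div_iff₀ hpos] at hN
  have hdk : d k ≤ d N := hd hk
  rw [hc L, le_div_iff₀ (by linarith)]
  nlinarith

/-- Proposition 1 of the paper, case `d₁ > γ`.  Indices `L ∈ {1,…,K}` are represented by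
`ℓ : Fin K` via `L = ℓ.val + 1`, so that `d_L = d ℓ` and `Σ_{k=1}^{L} (d_k − γ)`
is the sum over `k ∈ Finset.Iic ℓ`.  With `L̂ = max 𝓛`, `σ̂² = c(L̂)` and
`Λ̂ = V diag((dₖ − σ̂² − γ)₊) Vᵀ`, we have `σ̂² ≥ 0`, `Λ̂` is symmetric PSD, and
`(Λ̂, σ̂²)` minimizes `h(Λ, σ²) = (1/2)‖S − ΦΛΦᵀ − σ²I‖²_F + γ tr(Λ)`
over `σ² ≥ 0` and symmetric PSD `Λ`. -/
theorem stmt_1 (p K : ℕ) (hK : 1 ≤ K) (hpK : K < p)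
    (S : Matrix (Fin p) (Fin p) ℝ) (hS : S.PosSemidef)
    (Φ : Matrix (Fin p) (Fin K) ℝ) (hΦ : Φᵀ * Φ = 1)
    (γ : ℝ) (hγ : 0 ≤ γ)
    (d : Fin K → ℝ) (hd : Antitone d)
    (V : Matrix (Fin K) (Fin K) ℝ) (hV : Vᵀ * V = 1)
    (hdecomp : Φᵀ * S * Φ = V * Matrix.diagonal d * Vᵀ)
    (hd1 : γ < d ⟨0, hK⟩)
    (c : Fin K → ℝ)
    (hc : ∀ ℓ : Fin K,
      c ℓ = (S.trace - ∑ k ∈ Finset.Iic ℓ, (d k - γ)) / ((p : ℝ) - ((ℓ : ℕ) + 1)))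
    (Lset : Finset (Fin K))
    (hLset : Lset = Finset.univ.filter (fun ℓ : Fin K => c ℓ < d ℓ - γ))
    (hne : Lset.Nonempty)
    (Lhat : Fin K) (hLhat : Lhat = Lset.max' hne)
    (σ2hat : ℝ) (hσ2hat : σ2hat = c Lhat)
    (Λhat : Matrix (Fin K) (Fin K) ℝ)
    (hΛhat : Λhat = V * Matrix.diagonal (fun k => max (d k - σ2hat - γ) 0) * Vᵀ) :
    0 ≤ σ2hat ∧ Λhat.PosSemidef ∧
      ∀ σ2 : ℝ, 0 ≤ σ2 → ∀ Λ : Matrix (Fin K) (Fin K) ℝ, Λ.PosSemidef →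
        (1 / 2) * frobSq (S - Φ * Λhat * Φᵀ - σ2hat • (1 : Matrix (Fin p) (Fin p) ℝ))
            + γ * Λhat.trace ≤
          (1 / 2) * frobSq (S - Φ * Λ * Φᵀ - σ2 • (1 : Matrix (Fin p) (Fin p) ℝ))
            + γ * Λ.trace := by
  have hmem : ∀ ℓ, ℓ ∈ Lset ↔ c ℓ < d ℓ - γ := fun ℓ => by simp [hLset]
  have hin : c Lhat < d Lhat - γ := (hmem _).1 (hLhat ▸ Lset.max'_mem hne)
  have hmax : ∀ ℓ, Lhat < ℓ → d ℓ - γ ≤ c ℓ := fun ℓ hℓ => by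
    by_contra hlt
    have := Lset.le_max' ℓ ((hmem ℓ).2 (not_le.1 hlt))
    exact absurd hℓ (not_lt.2 (hLhat ▸ this))
  have habove : ∀ k, Lhat < k → d k - γ ≤ σ2hat := fun k hk =>
    hσ2hat ▸ sub_le_of_maximal_index hpK hd hc hmax hk
  have hbelow : ∀ k ≤ Lhat, σ2hat ≤ d k - γ := fun k hk => by
    have := hd hk
    linarith
  have hpos : (0 : ℝ) < p - ((Lhat : ℕ) + 1) := by
    have : (Lhat : ℕ) + 1 < p := by omega
    have : (((Lhat : ℕ) + 1 : ℕ) : ℝ) < p := by exact_mod_cast this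
    push_cast at this
    linarith
  have hσeq : σ2hat * ((p : ℝ) - ((Lhat : ℕ) + 1))
      = S.trace - ∑ k ∈ Finset.Iic Lhat, (d k - γ) := by
    rw [hσ2hat, hc, div_mul_cancel₀ _ hpos.ne']
  have hdiag : Matrix.diagonal d = (Φ * V)ᵀ * S * (Φ * V) := by
    calc Matrix.diagonal d = Vᵀ * V * Matrix.diagonal d * (Vᵀ * V) := by simp [hV]
      _ = Vᵀ * (Φᵀ * S * Φ) * V := by rw [hdecomp]; simp only [Matrix.mul_assoc]
      _ = _ := by simp only [Matrix.transpose_mul, Matrix.mul_assoc]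
  have hd0 : ∀ k, 0 ≤ d k := fun k => by
    have h : (Matrix.diagonal d).PosSemidef := by
      rw [hdiag]
      simpa using hS.conjTranspose_mul_mul_same (Φ * V)
    simpa using h.diag_nonneg (i := k)
  have hσ : 0 ≤ σ2hat := by
    have htr : ∑ k, d k ≤ S.trace := by
      rw [← trace_conj_diagonal hV d, ← hdecomp]
      exact trace_compression_le hS hΦ
    have hle : ∑ k ∈ Finset.Iic Lhat, (d k - γ) ≤ ∑ k, d k :=
      (Finset.sum_le_sum fun k _ => by linarith).trans
        (Finset.sum_le_sum_of_subset_of_nonneg (Finset.subset_univ _) fun k _ _ => hd0 k)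
    rw [hσ2hat, hc]
    exact div_nonneg (by linarith) hpos.le
  have hΛpsd : Λhat.PosSemidef := hΛhat ▸ posSemidef_conj_diagonal V fun k => le_max_right _ _
  refine ⟨hσ, hΛpsd, fun σ2 _ Λ hΛ => ?_⟩
  have hVV : V * Vᵀ = 1 := mul_eq_one_comm.1 hV
  have hΛtr : Λhat.trace
      = ∑ k ∈ Finset.Iic Lhat, (d k - γ) - ((Lhat : ℕ) + 1) * σ2hat := by
    rw [hΛhat, trace_conj_diagonal hV,
      ← Finset.sum_subset (Finset.subset_univ (Finset.Iic Lhat)) fun k _ hk =>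
        max_eq_right (by linarith [habove k (by simpa using hk)]),
      Finset.sum_congr rfl fun k hk =>
        max_eq_left (by linarith [hbelow k (Finset.mem_Iic.1 hk)]),
      Finset.sum_congr rfl fun k _ => show d k - σ2hat - γ = (d k - γ) - σ2hat by ring,
      Finset.sum_sub_distrib]
    simp
  have hgrad : γ • (1 : Matrix (Fin K) (Fin K) ℝ)
      - Φᵀ * (S - Φ * Λhat * Φᵀ - σ2hat • (1 : Matrix (Fin p) (Fin p) ℝ)) * Φ
      = V * Matrix.diagonal (fun k => max (σ2hat + γ - d k) 0) * Vᵀ := by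
    have hcomp : Φᵀ * (Φ * Λhat * Φᵀ) * Φ = Λhat := by
      calc Φᵀ * (Φ * Λhat * Φᵀ) * Φ = Φᵀ * Φ * Λhat * (Φᵀ * Φ) := by
            simp only [Matrix.mul_assoc]
        _ = Λhat := by simp [hΦ]
    have hg : Matrix.diagonal (fun k => max (σ2hat + γ - d k) 0)
        = (γ + σ2hat) • (1 : Matrix (Fin K) (Fin K) ℝ) - Matrix.diagonal d
          + Matrix.diagonal (fun k => max (d k - σ2hat - γ) 0) := by
      rw [← Matrix.diagonal_one, ← Matrix.diagonal_smul, Matrix.diagonal_sub, Matrix.diagonal_add]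
      congr 1
      ext k
      rcases le_total (d k) (σ2hat + γ) with h | h
      · rw [max_eq_left (by linarith), max_eq_right (by linarith)]
        simp
        ring
      · rw [max_eq_right (by linarith), max_eq_left (by linarith)]
        simp
        ring
    rw [hg]
    simp only [Matrix.mul_add, Matrix.mul_sub, Matrix.add_mul, Matrix.sub_mul, ← hdecomp, ← hΛhat,
      hcomp]
    simp only [Matrix.mul_smul, Matrix.smul_mul, Matrix.mul_one, hΦ, hVV]
    rw [add_smul]
    abel
  have hsymm : ∀ {M : Matrix (Fin K) (Fin K) ℝ}, M.PosSemidef → Mᵀ = M :=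
    fun h => by simpa using h.isHermitian.eq
  refine objective_le_of_stationary (hsymm hΛpsd) (hsymm hΛ) ?_ ?_
  · have hcyc : (Φ * Λhat * Φᵀ).trace = Λhat.trace := by
      rw [Matrix.trace_mul_comm, ← Matrix.mul_assoc, hΦ, Matrix.one_mul]
    rw [Matrix.trace_sub, Matrix.trace_sub, hcyc, hΛtr, Matrix.trace_smul, Matrix.trace_one]
    simp only [Fintype.card_fin, smul_eq_mul]
    linarith
  · have hcompl : (V * Matrix.diagonal (fun k => max (σ2hat + γ - d k) 0) * Vᵀ * Λhat).trace
        = 0 := by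
      have : Vᵀ * Λhat * V = Matrix.diagonal (fun k => max (d k - σ2hat - γ) 0) := by
        calc Vᵀ * Λhat * V
            = Vᵀ * V * Matrix.diagonal (fun k => max (d k - σ2hat - γ) 0) * (Vᵀ * V) := by
              rw [hΛhat]
              simp only [Matrix.mul_assoc]
          _ = _ := by simp [hV]
      rw [trace_conj_diagonal_mul, this]
      refine Finset.sum_eq_zero fun k _ => ?_
      rw [Matrix.diagonal_apply_eq]
      rcases le_total (d k) (σ2hat + γ) with h | h
      · rw [max_eq_right (a := d k - σ2hat - γ) (by linarith), mul_zero]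
      · rw [max_eq_right (by linarith), zero_mul]
    rw [hgrad, Matrix.mul_sub, Matrix.trace_sub, hcompl, sub_zero]
    exact trace_conj_diagonal_mul_nonneg V hΛ fun k => le_max_right _ _
end

section
/- Let p ≥ K ≥ 1, let S be a p×p real symmetric positive semidefinite matrix, let Φ be a p×K real matrix with ΦᵀΦ = I_K, let γ ≥ 0, and fix σ² ≥ 0. Suppose ΦᵀSΦ = V·diag(d₁,…,d_K)·Vᵀ with V a K×K orthogonal matrix and d₁ ≥ … ≥ d_K. Then Λ̂(σ²) = V·diag((d₁ − σ² − γ)₊, …, (d_K − σ² − γ)₊)·Vᵀ minimizes the map Λ ↦ (1/2)‖S − ΦΛΦᵀ − σ²I_p‖²_F + γ·tr(Λ) over all K×K real symmetric positive semidefinite matrices Λ; that is, for every such Λ, (1/2)‖S − ΦΛ̂(σ²)Φᵀ − σ²I_p‖²_F + γ·tr(Λ̂(σ²)) ≤ (1/2)‖S − ΦΛΦᵀ − σ²I_p‖²_F + γ·tr(Λ). -/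
open Matrix BigOperators

/-- Expansion of `‖A − WMWᵀ‖²` when `W` has orthonormal columns. -/
theorem frobSq_sub_conj {m n : Type*} [Fintype m] [Fintype n] [DecidableEq n]
    (A : Matrix m m ℝ) {W : Matrix m n ℝ} (hW : Wᵀ * W = 1) (M : Matrix n n ℝ) :
    frobSq (A - W * M * Wᵀ) = frobSq A - 2 * (Mᵀ * (Wᵀ * A * W)).trace + frobSq M := by
  have hcross : ((W * M * Wᵀ)ᵀ * A).trace = (Mᵀ * (Wᵀ * A * W)).trace := by
    simp only [transpose_mul, transpose_transpose, Matrix.mul_assoc]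
    rw [trace_mul_comm]
    simp only [Matrix.mul_assoc]
  have hsymm : (Aᵀ * (W * M * Wᵀ)).trace = ((W * M * Wᵀ)ᵀ * A).trace := by
    rw [← trace_transpose, transpose_mul, transpose_transpose]
  have hself : ((W * M * Wᵀ)ᵀ * (W * M * Wᵀ)).trace = (Mᵀ * M).trace := by
    have h : (W * M * Wᵀ)ᵀ * (W * M * Wᵀ) = W * (Mᵀ * (Wᵀ * W) * M * Wᵀ) := by
      simp only [transpose_mul, transpose_transpose, Matrix.mul_assoc]
    rw [h, hW, Matrix.mul_one, trace_mul_comm, Matrix.mul_assoc, hW, Matrix.mul_one]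
  simp only [frobSq_eq_trace, transpose_sub, Matrix.sub_mul, Matrix.mul_sub, trace_sub, hsymm,
    hself, hcross]
  ring

theorem frobSq_diagonal {n : Type*} [Fintype n] [DecidableEq n] (a : n → ℝ) :
    frobSq (diagonal a) = ∑ k, a k ^ 2 := by
  simp [frobSq_eq_trace, diagonal_mul_diagonal, sq]

theorem sum_diag_sq_le_frobSq {n : Type*} [Fintype n] (M : Matrix n n ℝ) :
    ∑ k, M k k ^ 2 ≤ frobSq M :=
  Finset.sum_le_sum fun k _ =>
    Finset.single_le_sum (f := fun j => M k j ^ 2) (fun _ _ => sq_nonneg _) (Finset.mem_univ k)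

theorem trace_mul_diagonal {n : Type*} [Fintype n] [DecidableEq n] (M : Matrix n n ℝ)
    (a : n → ℝ) : (M * diagonal a).trace = ∑ k, M k k * a k := by
  simp [Matrix.trace, mul_diagonal]

/-- `e₊` minimizes `x ↦ x² / 2 - e x` over `x ≥ 0`. -/
theorem half_sq_sub_mul_posPart_le (e : ℝ) {x : ℝ} (hx : 0 ≤ x) :
    max e 0 ^ 2 / 2 - e * max e 0 ≤ x ^ 2 / 2 - e * x := by
  rcases le_total e 0 with h | h
  · rw [max_eq_right h]
    nlinarith [mul_nonneg (neg_nonneg.2 h) hx, sq_nonneg x]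
  · rw [max_eq_left h]
    nlinarith [sq_nonneg (x - e)]

/-- For fixed `σ² ≥ 0`, the matrix `Λ̂(σ²) = V diag((dₖ − σ² − γ)₊) Vᵀ` minimizes
`Λ ↦ (1/2)‖S − ΦΛΦᵀ − σ²I‖²_F + γ tr(Λ)` over symmetric PSD `Λ`
(equation (17) in the proof of Proposition 1). -/
theorem stmt_2 (p K : ℕ) (hK : 1 ≤ K) (hpK : K ≤ p)
    (S : Matrix (Fin p) (Fin p) ℝ) (hS : S.PosSemidef)
    (Φ : Matrix (Fin p) (Fin K) ℝ) (hΦ : Φᵀ * Φ = 1)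
    (γ : ℝ) (hγ : 0 ≤ γ)
    (σ2 : ℝ) (hσ2 : 0 ≤ σ2)
    (d : Fin K → ℝ) (hd : Antitone d)
    (V : Matrix (Fin K) (Fin K) ℝ) (hV : Vᵀ * V = 1)
    (hdecomp : Φᵀ * S * Φ = V * Matrix.diagonal d * Vᵀ)
    (Λhat : Matrix (Fin K) (Fin K) ℝ)
    (hΛhat : Λhat = V * Matrix.diagonal (fun k => max (d k - σ2 - γ) 0) * Vᵀ) :
    ∀ Λ : Matrix (Fin K) (Fin K) ℝ, Λ.PosSemidef →
      (1 / 2) * frobSq (S - Φ * Λhat * Φᵀ - σ2 • (1 : Matrix (Fin p) (Fin p) ℝ))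
          + γ * Λhat.trace ≤
        (1 / 2) * frobSq (S - Φ * Λ * Φᵀ - σ2 • (1 : Matrix (Fin p) (Fin p) ℝ))
          + γ * Λ.trace := by
  intro Λ hΛ
  have hV' : V * Vᵀ = 1 := mul_eq_one_comm.mp hV
  have hW : (Φ * V)ᵀ * (Φ * V) = 1 := by
    rw [transpose_mul, Matrix.mul_assoc, ← Matrix.mul_assoc Φᵀ, hΦ, Matrix.one_mul, hV]
  have hWA : (Φ * V)ᵀ * (S - σ2 • (1 : Matrix (Fin p) (Fin p) ℝ)) * (Φ * V) =
      diagonal fun k => d k - σ2 := by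
    have h : (Φ * V)ᵀ * S * (Φ * V) = diagonal d := by
      calc (Φ * V)ᵀ * S * (Φ * V) = Vᵀ * (Φᵀ * S * Φ) * V := by
            simp only [transpose_mul, Matrix.mul_assoc]
        _ = (Vᵀ * V) * diagonal d * (Vᵀ * V) := by
            rw [hdecomp]
            simp only [Matrix.mul_assoc]
        _ = diagonal d := by rw [hV, Matrix.one_mul, Matrix.mul_one]
    rw [Matrix.mul_sub, Matrix.sub_mul, h, Matrix.mul_smul, Matrix.mul_one, Matrix.smul_mul, hW,
      smul_one_eq_diagonal, diagonal_sub]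
  have hobj (M : Matrix (Fin K) (Fin K) ℝ) :
      1 / 2 * frobSq (S - Φ * (V * M * Vᵀ) * Φᵀ - σ2 • (1 : Matrix (Fin p) (Fin p) ℝ))
          + γ * (V * M * Vᵀ).trace =
        1 / 2 * frobSq (S - σ2 • (1 : Matrix (Fin p) (Fin p) ℝ))
          + (1 / 2 * frobSq M - ∑ k, (d k - σ2 - γ) * M k k) := by
    have hM : Φ * (V * M * Vᵀ) * Φᵀ = Φ * V * M * (Φ * V)ᵀ := by
      simp only [transpose_mul, Matrix.mul_assoc]
    have htr : (V * M * Vᵀ).trace = ∑ k, M k k := by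
      rw [trace_mul_comm, ← Matrix.mul_assoc, hV, Matrix.one_mul]
      rfl
    have hsum : ∑ k, (d k - σ2 - γ) * M k k = ∑ k, M k k * (d k - σ2) - γ * ∑ k, M k k := by
      rw [Finset.mul_sum, ← Finset.sum_sub_distrib]
      exact Finset.sum_congr rfl fun k _ => by ring
    rw [sub_right_comm, hM, frobSq_sub_conj _ hW, hWA, trace_mul_diagonal, htr, hsum]
    simp only [transpose_apply]
    ring
  have hconj : Λ = V * (Vᵀ * Λ * V) * Vᵀ := by
    calc Λ = (V * Vᵀ) * Λ * (V * Vᵀ) := by rw [hV', Matrix.one_mul, Matrix.mul_one]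
      _ = V * (Vᵀ * Λ * V) * Vᵀ := by simp only [Matrix.mul_assoc]
  have hpsd : (Vᵀ * Λ * V).PosSemidef := by
    simpa [conjTranspose_eq_transpose_of_trivial] using hΛ.conjTranspose_mul_mul_same V
  rw [hΛhat, hconj, hobj, hobj, frobSq_diagonal]
  generalize Vᵀ * Λ * V = M at hpsd ⊢
  have hscalar := Finset.sum_le_sum fun k (_ : k ∈ Finset.univ) =>
    half_sq_sub_mul_posPart_le (d k - σ2 - γ) (hpsd.diag_nonneg (i := k))
  simp only [Finset.sum_sub_distrib, ← Finset.sum_div] at hscalar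
  simp only [diagonal_apply_eq]
  linarith [sum_diag_sq_le_frobSq M]
end

section
/- Let p ≥ K ≥ 1, let S be a p×p real symmetric matrix, let Φ be a p×K real matrix with ΦᵀΦ = I_K, let Λ be any K×K real matrix, and let σ² be any real number. Then (1/2)‖S − ΦΛΦᵀ − σ²I_p‖²_F = (1/2)‖ΦΦᵀSΦΦᵀ − ΦΛΦᵀ − σ²I_p‖²_F + (1/2)‖S − ΦΦᵀSΦΦᵀ‖²_F + σ²·tr(ΦΦᵀSΦΦᵀ − S). -/
open Matrix BigOperators

/-- Polarization identity for the squared Frobenius norm. -/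
theorem frobSq_add {m n : Type*} [Fintype m] [Fintype n] (A D : Matrix m n ℝ) :
    frobSq (A + D) = frobSq A + frobSq D + 2 * (Aᵀ * D).trace := by
  have h : (Aᵀ * D).trace = ∑ i, ∑ j, A i j * D i j := by
    simp only [trace, diag, mul_apply, transpose_apply]
    exact Finset.sum_comm
  simp only [h, frobSq, Finset.mul_sum, ← Finset.sum_add_distrib, Matrix.add_apply]
  exact Finset.sum_congr rfl fun i _ => Finset.sum_congr rfl fun j _ => by ring

/-- If `Φ` has orthonormal columns, compressing `S` to the column space of `Φ` leaves a residual
with zero compression. -/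
theorem transpose_mul_sub_compression_mul {m n : Type*} [Fintype m] [Fintype n] [DecidableEq n]
    (S : Matrix m m ℝ) (Φ : Matrix m n ℝ) (hΦ : Φᵀ * Φ = 1) :
    Φᵀ * (S - Φ * Φᵀ * S * Φ * Φᵀ) * Φ = 0 := by
  have h : Φᵀ * (Φ * Φᵀ * S * Φ * Φᵀ) * Φ = (Φᵀ * Φ) * (Φᵀ * S * Φ) * (Φᵀ * Φ) := by
    simp only [Matrix.mul_assoc]
  rw [Matrix.mul_sub, Matrix.sub_mul, h, hΦ, Matrix.one_mul, Matrix.mul_one, sub_self]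

/-- Decomposition of the regularized least-squares objective
(equation (18) in the proof of Proposition 1):
`(1/2)‖S − ΦΛΦᵀ − σ²I‖²_F = (1/2)‖ΦΦᵀSΦΦᵀ − ΦΛΦᵀ − σ²I‖²_F
  + (1/2)‖S − ΦΦᵀSΦΦᵀ‖²_F + σ² tr(ΦΦᵀSΦΦᵀ − S)`. -/
theorem stmt_3 (p K : ℕ) (hK : 1 ≤ K) (hKp : K ≤ p)
    (S : Matrix (Fin p) (Fin p) ℝ) (hS : S.IsSymm)
    (Φ : Matrix (Fin p) (Fin K) ℝ) (hΦ : Φᵀ * Φ = 1)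
    (Λ : Matrix (Fin K) (Fin K) ℝ) (σ2 : ℝ) :
    (1 / 2) * frobSq (S - Φ * Λ * Φᵀ - σ2 • (1 : Matrix (Fin p) (Fin p) ℝ)) =
      (1 / 2) * frobSq (Φ * Φᵀ * S * Φ * Φᵀ - Φ * Λ * Φᵀ
          - σ2 • (1 : Matrix (Fin p) (Fin p) ℝ))
        + (1 / 2) * frobSq (S - Φ * Φᵀ * S * Φ * Φᵀ)
        + σ2 * (Φ * Φᵀ * S * Φ * Φᵀ - S).trace := by
  set D := S - Φ * Φᵀ * S * Φ * Φᵀ with hD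
  set N := Φᵀ * S * Φ - Λ with hN
  have hA : Φ * Φᵀ * S * Φ * Φᵀ - Φ * Λ * Φᵀ - σ2 • (1 : Matrix (Fin p) (Fin p) ℝ) =
      Φ * N * Φᵀ - σ2 • 1 := by
    simp only [hN, Matrix.mul_sub, Matrix.sub_mul, Matrix.mul_assoc]
  have hsum : S - Φ * Λ * Φᵀ - σ2 • (1 : Matrix (Fin p) (Fin p) ℝ) =
      (Φ * N * Φᵀ - σ2 • 1) + D := by
    rw [← hA, hD]
    abel
  have hcross : ((Φ * N * Φᵀ)ᵀ * D).trace = 0 := by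
    have h : (Φ * N * Φᵀ)ᵀ * D = Φ * (Nᵀ * (Φᵀ * D)) := by
      simp only [transpose_mul, transpose_transpose, Matrix.mul_assoc]
    rw [h, trace_mul_comm, Matrix.mul_assoc, transpose_mul_sub_compression_mul S Φ hΦ,
      Matrix.mul_zero, trace_zero]
  have htrace : (Φ * Φᵀ * S * Φ * Φᵀ - S).trace = -D.trace := by
    rw [← trace_neg, hD, neg_sub]
  have hinner : ((Φ * N * Φᵀ - σ2 • 1)ᵀ * D).trace = -(σ2 * D.trace) := by
    rw [transpose_sub, Matrix.sub_mul, trace_sub, hcross, transpose_smul, transpose_one,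
      smul_mul, Matrix.one_mul, trace_smul, smul_eq_mul, zero_sub]
  rw [hsum, hA, htrace, frobSq_add, hinner]
  ring
end

section
/- Let p > K ≥ 1 be integers, let d₁ ≥ d₂ ≥ … ≥ d_K ≥ 0 be real numbers, let γ ≥ 0, and let T be a real number with T ≥ Σ_{k=1}^{K} d_k. Assume d₁ > γ and that the set 𝓛 = { L ∈ {1,…,K} : d_L − γ > (T − Σ_{k=1}^{L}(d_k − γ))/(p − L) } is nonempty. Set L̂ = max 𝓛 and x̂ = (T − Σ_{k=1}^{L̂}(d_k − γ))/(p − L̂). Then x̂ ≥ 0 and x̂ minimizes the function g(x) = p·x² − 2·x·T − Σ_{k=1}^{K} ((d_k − x − γ)₊)² over all x ≥ 0; that is, g(x̂) ≤ g(x) for every x ≥ 0. -/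
open BigOperators

/-- Second-order upper bound for the squared positive part `((a - x)₊)²` around `y`,
on the branch `y < a` (where `P` holds) or `a ≤ y` (where it fails). -/
lemma sq_posPart_sub_le (P : Prop) [Decidable P] (a x y : ℝ) (hP : P → y < a) (hnP : ¬P → a ≤ y) :
    (max (a - x) 0) ^ 2 ≤
      (max (a - y) 0) ^ 2 + (x - y) ^ 2 - 2 * (x - y) * (if P then a - y else 0) := by
  split_ifs with h
  · rw [max_eq_left (a := a - y) (by linarith [hP h])]
    rcases max_cases (a - x) 0 with ⟨h₁, -⟩ | ⟨h₁, -⟩ <;> rw [h₁] <;>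
      nlinarith [sq_nonneg (a - x)]
  · have hay := hnP h
    rw [max_eq_right (a := a - y) (by linarith)]
    rcases max_cases (a - x) 0 with ⟨h₁, h₂⟩ | ⟨h₁, -⟩ <;> rw [h₁] <;>
      nlinarith [sq_nonneg (x - y)]

lemma Fin.Iic_mk_succ {K : ℕ} (m : Fin K) (h : (m : ℕ) + 1 < K) :
    Finset.Iic (⟨m + 1, h⟩ : Fin K) = insert ⟨m + 1, h⟩ (Finset.Iic m) := by
  ext k
  simp only [Finset.mem_Iic, Finset.mem_insert, Fin.le_def, Fin.ext_iff]
  omega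

/-- The scalar minimization characterizing the optimal noise variance in the proof of
Proposition 1.  Indices `L ∈ {1,…,K}` are represented by `ℓ : Fin K` via `L = ℓ.val + 1`,
so `d_L = d ℓ` and `Σ_{k=1}^{L}(d_k − γ)` is the sum over `k ∈ Finset.Iic ℓ`.
With `L̂ = max 𝓛` and `x̂ = c(L̂)`, we have `x̂ ≥ 0` and `x̂` minimizes
`g(x) = p x² − 2 x T − Σₖ ((dₖ − x − γ)₊)²` over `x ≥ 0`. -/
theorem stmt_5 (p K : ℕ) (hK : 1 ≤ K) (hpK : K < p)
    (d : Fin K → ℝ) (hd : Antitone d) (hdnn : ∀ k, 0 ≤ d k)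
    (γ : ℝ) (hγ : 0 ≤ γ)
    (T : ℝ) (hT : ∑ k : Fin K, d k ≤ T)
    (hd1 : γ < d ⟨0, hK⟩)
    (c : Fin K → ℝ)
    (hc : ∀ ℓ : Fin K,
      c ℓ = (T - ∑ k ∈ Finset.Iic ℓ, (d k - γ)) / ((p : ℝ) - ((ℓ : ℕ) + 1)))
    (Lset : Finset (Fin K))
    (hLset : Lset = Finset.univ.filter (fun ℓ : Fin K => c ℓ < d ℓ - γ))
    (hne : Lset.Nonempty)
    (xhat : ℝ) (hxhat : xhat = c (Lset.max' hne)) :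
    0 ≤ xhat ∧
      ∀ x : ℝ, 0 ≤ x →
        (p : ℝ) * xhat ^ 2 - 2 * xhat * T - ∑ k : Fin K, (max (d k - xhat - γ) 0) ^ 2 ≤
          (p : ℝ) * x ^ 2 - 2 * x * T - ∑ k : Fin K, (max (d k - x - γ) 0) ^ 2 := by
  have hmem := Lset.max'_mem hne
  have hmax : ∀ j, Lset.max' hne < j → d j - γ ≤ c j := by
    intro j hj
    by_contra! hlt
    have hjL : j ∈ Lset := by simp [hLset, hlt]
    exact absurd (Lset.le_max' j hjL) (not_le.mpr hj)
  generalize Lset.max' hne = m at hxhat hmem hmax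
  have hm : xhat < d m - γ := by
    rw [hLset, Finset.mem_filter] at hmem
    rw [hxhat]
    exact hmem.2
  have hKp : (K : ℝ) + 1 ≤ p := by exact_mod_cast hpK
  have hmK : (m : ℝ) + 1 ≤ K := by exact_mod_cast m.2
  have hpos : 0 < (p : ℝ) - ((m : ℕ) + 1) := by linarith
  have hx : xhat * ((p : ℝ) - ((m : ℕ) + 1)) = T - ∑ k ∈ Finset.Iic m, (d k - γ) := by
    rw [hxhat, hc, div_mul_cancel₀ _ hpos.ne']
  have hactive : ∀ k, k ≤ m → xhat < d k - γ := fun k hk => by linarith [hd hk]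
  have hinactive : ∀ k, ¬k ≤ m → d k - γ ≤ xhat := by
    intro k hk
    have hmk : (m : ℕ) + 1 ≤ k := not_le.mp hk
    have hlt : (m : ℕ) + 1 < K := hmk.trans_lt k.2
    have hmono : d k ≤ d ⟨m + 1, hlt⟩ := hd (Fin.le_def.mpr hmk)
    have hle := hmax ⟨m + 1, hlt⟩ (Fin.lt_def.mpr (Nat.lt_succ_self _))
    have hltR : (m : ℝ) + 1 + 1 ≤ K := by exact_mod_cast hlt
    have hpos' : 0 < (p : ℝ) - (((m : ℕ) + 1 : ℕ) + 1) := by push_cast; linarith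
    rw [hc, le_div_iff₀ hpos', Fin.Iic_mk_succ, Finset.sum_insert (by simp [Fin.le_def])] at hle
    push_cast at hle
    have : d ⟨m + 1, hlt⟩ - γ ≤ xhat := le_of_mul_le_mul_right (by linarith) hpos
    linarith
  refine ⟨?_, fun x _ => ?_⟩
  · rw [hxhat, hc]
    refine div_nonneg (sub_nonneg.mpr ?_) hpos.le
    calc ∑ k ∈ Finset.Iic m, (d k - γ) ≤ ∑ k ∈ Finset.Iic m, d k :=
          Finset.sum_le_sum fun k _ => by linarith
      _ ≤ ∑ k, d k :=
          Finset.sum_le_sum_of_subset_of_nonneg (Finset.subset_univ _) fun k _ _ => hdnn k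
      _ ≤ T := hT
  · have hsum : ∑ k, (if k ≤ m then d k - γ - xhat else 0) =
        ∑ k ∈ Finset.Iic m, (d k - γ) - ((m : ℕ) + 1) * xhat := by
      rw [← Finset.sum_filter, Finset.filter_ge_eq_Iic, Finset.sum_sub_distrib]
      simp [Fin.card_Iic]
    have hbound := Finset.sum_le_sum fun k (_ : k ∈ Finset.univ) =>
      sq_posPart_sub_le (k ≤ m) (d k - γ) x xhat (hactive k) (hinactive k)
    rw [Finset.sum_sub_distrib, Finset.sum_add_distrib, ← Finset.mul_sum, hsum] at hbound
    simp only [Finset.sum_const, Finset.card_univ, Fintype.card_fin, nsmul_eq_mul] at hbound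
    simp only [sub_right_comm (d _) _ γ]
    have hS : ∑ k ∈ Finset.Iic m, (d k - γ) - ((m : ℕ) + 1) * xhat = T - p * xhat := by linarith
    rw [hS] at hbound
    nlinarith [mul_nonneg (by linarith : (0 : ℝ) ≤ p - K) (sq_nonneg (x - xhat))]
end

section
/- Let p > K ≥ 1 be integers, let d₁ ≥ d₂ ≥ … ≥ d_K be real numbers, let γ ≥ 0, and let T be a real number. For L ∈ {1,…,K} define c(L) = (T − Σ_{k=1}^{L}(d_k − γ))/(p − L). Assume the set 𝓛 = { L ∈ {1,…,K} : d_L − γ > c(L) } is nonempty and set L̂ = max 𝓛 and σ̂² = c(L̂). Then for every k ∈ {1,…,K}: d_k − γ > σ̂² if and only if k ≤ L̂. -/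
open BigOperators

/-- The identification `L̂* = L̂` in the proof of Proposition 1.  Indices `L ∈ {1,…,K}`
are represented by `ℓ : Fin K` via `L = ℓ.val + 1`, so `d_L = d ℓ`,
`Σ_{k=1}^{L}(d_k − γ)` is the sum over `k ∈ Finset.Iic ℓ`, and the conclusion
"`d_k − γ > σ̂²` iff `k ≤ L̂`" reads `d k − γ > σ̂² ↔ k ≤ L̂` in `Fin K`. -/
theorem stmt_6 (p K : ℕ) (hK : 1 ≤ K) (hpK : K < p)
    (d : Fin K → ℝ) (hd : Antitone d)
    (γ : ℝ) (hγ : 0 ≤ γ) (T : ℝ)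
    (c : Fin K → ℝ)
    (hc : ∀ ℓ : Fin K,
      c ℓ = (T - ∑ k ∈ Finset.Iic ℓ, (d k - γ)) / ((p : ℝ) - ((ℓ : ℕ) + 1)))
    (Lset : Finset (Fin K))
    (hLset : Lset = Finset.univ.filter (fun ℓ : Fin K => c ℓ < d ℓ - γ))
    (hne : Lset.Nonempty)
    (Lhat : Fin K) (hLhat : Lhat = Lset.max' hne)
    (σ2hat : ℝ) (hσ2hat : σ2hat = c Lhat) :
    ∀ k : Fin K, σ2hat < d k - γ ↔ k ≤ Lhat := by
  have hmem : Lhat ∈ Lset := hLhat ▸ Lset.max'_mem hne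
  have hmax : ∀ ℓ ∈ Lset, ℓ ≤ Lhat := fun ℓ hℓ => hLhat ▸ Lset.le_max' ℓ hℓ
  simp only [hLset, Finset.mem_filter, Finset.mem_univ, true_and] at hmem hmax
  intro k
  subst hσ2hat
  refine ⟨fun hk => ?_, fun hk => ?_⟩
  · by_contra! hlt
    have hsucc : (Lhat : ℕ) + 1 < K := lt_of_le_of_lt (Fin.lt_def.mp hlt) k.isLt
    obtain ⟨m, hm⟩ : ∃ m : Fin K, (m : ℕ) = Lhat + 1 := ⟨⟨_, hsucc⟩, rfl⟩
    have hmk : m ≤ k := Fin.le_def.mpr (hm ▸ Fin.lt_def.mp hlt)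
    have hcm : d m - γ ≤ c m := by
      by_contra! h
      have := Fin.le_def.mp (hmax m h)
      omega
    have hIic : Finset.Iic m = insert m (Finset.Iic Lhat) := by
      ext j
      simp only [Finset.mem_Iic, Finset.mem_insert, Fin.le_def, Fin.ext_iff]
      omega
    have hnot : m ∉ Finset.Iic Lhat := by
      simp only [Finset.mem_Iic, Fin.le_def]
      omega
    have hp : (Lhat : ℝ) + 2 < p := by
      have : (Lhat : ℕ) + 2 < p := by omega
      exact_mod_cast this
    rw [hc, hIic, Finset.sum_insert hnot, hm, le_div_iff₀ (by push_cast; linarith)] at hcm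
    push_cast at hcm
    have hle : d m - γ ≤ c Lhat := by
      rw [hc, le_div_iff₀ (by linarith)]
      linarith
    linarith [hd hmk]
  · linarith [hd hk]
end
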